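/- arXiv:1406.5583 — 2 statements merged into one kernel-verified Lean document; each statement's English description precedes it below -/
import Mathlib

section
/- Let f(p) = Σ_{m=0}^∞ pᵐ aₘ be an entire power series with quaternionic coefficients and let I, J ∈ 𝕊 be two imaginary units. Then (1/π) ∫_{ℝ²} e^{−(x²+y²)} |f(x+yI)|² \,dx\,dy < ∞ if and only if (1/π) ∫_{ℝ²} e^{−(x²+y²)} |f(x+yJ)|² \,dx\,dy < ∞; that is, the definition of the slice hyperholomorphic quaternionic Fock space does not depend on the choice of imaginary unit. -/
/-!
Since `(x + yI)ᵐ = u + vI` with `u, v` real and independent of `I`, an entire power series has the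
form `f (x + yI) = α(x, y) + I β(x, y)`. By the parallelogram law
`|f(x + yI)|² + |f(x - yI)|² = 2 (|α|² + |β|²)`, and the Gaussian measure is invariant under
`(x, y) ↦ (x, -y)`, so the Fock norm of `f` on `ℂ_I` is the `L²` norm of `(α, β)`, whatever `I` is.
-/

open MeasureTheory Real Nat

noncomputable section

local notation "ℍ" => Quaternion ℝ

/-- The sphere of quaternionic imaginary units. -/
def quatSphere : Set ℍ := {q | q.re = 0 ∧ ‖q‖ = 1}

/-- The point `x + y I` of the slice `ℂ_I`. -/
def sliceVal (I : ℍ) (z : ℝ × ℝ) : ℍ := ((z.1 : ℍ)) + ((z.2 : ℍ)) * I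

/-- The squared Fock norm of `f` on the slice `ℂ_I`, with values in `[0,∞]`. -/
def fockNormSq (I : ℍ) (f : ℍ → ℍ) : ENNReal :=
  ENNReal.ofReal π⁻¹ *
    ∫⁻ z : ℝ × ℝ, ENNReal.ofReal (Real.exp (-(z.1 ^ 2 + z.2 ^ 2)) * ‖f (sliceVal I z)‖ ^ 2)

section ImaginaryUnits

variable {I : ℍ}

theorem mul_self_eq_neg_one_of_mem_quatSphere (hI : I ∈ quatSphere) : I * I = -1 := by
  have hsq : I ^ 2 = -Quaternion.normSq I := Quaternion.sq_eq_neg_normSq.2 hI.1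
  simpa [sq, Quaternion.normSq_eq_norm_mul_self, hI.2] using hsq

theorem neg_mem_quatSphere (hI : I ∈ quatSphere) : -I ∈ quatSphere :=
  ⟨by simp [hI.1], by simp [hI.2]⟩

theorem norm_add_mul_sq_add_norm_sub_mul_sq (hI : ‖I‖ = 1) (p q : ℍ) :
    ‖p + I * q‖ ^ 2 + ‖p - I * q‖ ^ 2 = 2 * (‖p‖ ^ 2 + ‖q‖ ^ 2) := by
  simpa [sq, hI] using parallelogram_law_with_norm ℝ p (I * q)

end ImaginaryUnits

theorem sliceVal_mul (I q : ℍ) (z : ℝ × ℝ) :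
    sliceVal I z * q = z.1 • q + I * (z.2 • q) := by
  simp [sliceVal, add_mul, Quaternion.coe_mul_eq_smul]

theorem sliceVal_conj (I : ℍ) (z : ℝ × ℝ) : sliceVal I (z.1, -z.2) = sliceVal (-I) z := by
  simp [sliceVal]

theorem continuous_sliceVal (I : ℍ) : Continuous (sliceVal I) := by
  have hcoe : Continuous ((↑) : ℝ → ℍ) := Quaternion.continuous_coe
  unfold sliceVal
  fun_prop

theorem sliceVal_pow {I : ℍ} (hI : I * I = -1) (z : ℝ × ℝ) (m : ℕ) :
    sliceVal I z ^ m =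
      sliceVal I (Complex.equivRealProd (Complex.equivRealProd.symm z ^ m)) := by
  have hlift (w : ℂ) : sliceVal I (Complex.equivRealProd w) = Complex.liftAux I hI w := by
    simp [sliceVal, Quaternion.coe_mul_eq_smul]
  rw [hlift, map_pow, ← hlift, Equiv.apply_symm_apply]

/-- `f` is a slice function with stem `(α, β)`, i.e. `f (x + yI) = α(x, y) + I β(x, y)` for all
imaginary units `I`. The usual parity conditions on `α` and `β` in `y` are not imposed. -/
def HasStem (f : ℍ → ℍ) (α β : ℝ × ℝ → ℍ) : Prop :=
  ∀ I ∈ quatSphere, ∀ z, f (sliceVal I z) = α z + I * β z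

section PowerSeries

theorem summable_smul_of_abs_le {ι E : Type*} [NormedAddCommGroup E] [NormedSpace ℝ E]
    [FiniteDimensional ℝ E] {b c : ι → ℝ} {v : ι → E} (hb : Summable fun i ↦ b i • v i)
    (hcb : ∀ i, |c i| ≤ |b i|) : Summable fun i ↦ c i • v i := by
  refine .of_norm_bounded hb.norm fun i ↦ ?_
  rw [norm_smul, norm_smul]
  exact mul_le_mul_of_nonneg_right (hcb i) (norm_nonneg _)

variable {f : ℍ → ℍ} {a : ℕ → ℍ}

theorem hasStem_of_hasSum (hf : ∀ p : ℍ, HasSum (fun m ↦ p ^ m * a m) (f p)) :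
    HasStem f (fun z ↦ ∑' m, (Complex.equivRealProd.symm z ^ m).re • a m)
      (fun z ↦ ∑' m, (Complex.equivRealProd.symm z ^ m).im • a m) := by
  intro I hI z
  set w := Complex.equivRealProd.symm z
  -- The power series at the real point `‖w‖` dominates both components.
  have hnorm : Summable fun m ↦ ‖w ^ m‖ • a m := by
    simpa only [← Quaternion.coe_pow, Quaternion.coe_mul_eq_smul, norm_pow]
      using (hf ‖w‖).summable
  have hre : Summable fun m ↦ (w ^ m).re • a m :=
    summable_smul_of_abs_le hnorm fun m ↦ by simpa using Complex.abs_re_le_norm (w ^ m)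
  have him : Summable fun m ↦ (w ^ m).im • a m :=
    summable_smul_of_abs_le hnorm fun m ↦ by simpa using Complex.abs_im_le_norm (w ^ m)
  refine (hf (sliceVal I z)).unique ((hre.hasSum.add (him.hasSum.mul_left I)).congr_fun ?_)
  intro m
  rw [sliceVal_pow (mul_self_eq_neg_one_of_mem_quatSphere hI), sliceVal_mul]
  rfl

theorem stronglyMeasurable_sliceVal_of_hasSum
    (hf : ∀ p : ℍ, HasSum (fun m ↦ p ^ m * a m) (f p)) (I : ℍ) :
    StronglyMeasurable fun z ↦ f (sliceVal I z) := by
  refine stronglyMeasurable_of_tendsto Filter.atTop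
    (f := fun n z ↦ ∑ m ∈ Finset.range n, sliceVal I z ^ m * a m) (fun n ↦ ?_)
    (tendsto_pi_nhds.2 fun z ↦ (hf (sliceVal I z)).tendsto_sum_nat)
  have hcont := continuous_sliceVal I
  exact Continuous.stronglyMeasurable (by fun_prop)

end PowerSeries

section FockNorm

theorem lintegral_add_comp_eq_two_mul {X : Type*} [MeasurableSpace X] {μ : Measure X} {T : X → X}
    (hT : MeasurePreserving T μ μ) {g : X → ENNReal} (hg : AEMeasurable g μ) :
    ∫⁻ x, g x + g (T x) ∂μ = 2 * ∫⁻ x, g x ∂μ := by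
  have hcomp : ∫⁻ x, g (T x) ∂μ = ∫⁻ x, g x ∂μ := by
    rw [← lintegral_map' (by rwa [hT.map_eq]) hT.aemeasurable, hT.map_eq]
  rw [lintegral_add_left' hg, hcomp, two_mul]

variable {f : ℍ → ℍ} {α β : ℝ × ℝ → ℍ} {I J : ℍ}

theorem HasStem.norm_sliceVal_sq_add_norm_sliceVal_conj_sq (hf : HasStem f α β)
    (hI : I ∈ quatSphere) (z : ℝ × ℝ) :
    ‖f (sliceVal I z)‖ ^ 2 + ‖f (sliceVal I (z.1, -z.2))‖ ^ 2 =
      2 * (‖α z‖ ^ 2 + ‖β z‖ ^ 2) := by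
  rw [sliceVal_conj, hf I hI, hf (-I) (neg_mem_quatSphere hI), neg_mul, ← sub_eq_add_neg,
    norm_add_mul_sq_add_norm_sub_mul_sq hI.2]

theorem HasStem.fockNormSq_eq_lintegral (hf : HasStem f α β) (hI : I ∈ quatSphere)
    (hfI : AEStronglyMeasurable fun z ↦ f (sliceVal I z)) :
    fockNormSq I f = ENNReal.ofReal π⁻¹ * ∫⁻ z : ℝ × ℝ,
      ENNReal.ofReal (Real.exp (-(z.1 ^ 2 + z.2 ^ 2)) * (‖α z‖ ^ 2 + ‖β z‖ ^ 2)) := by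
  set g : ℝ × ℝ → ENNReal := fun z ↦
    ENNReal.ofReal (Real.exp (-(z.1 ^ 2 + z.2 ^ 2)) * ‖f (sliceVal I z)‖ ^ 2)
  have hg : AEMeasurable g := by
    have hnorm : AEMeasurable fun z ↦ ‖f (sliceVal I z)‖ := hfI.norm.aemeasurable
    fun_prop
  have hreflect : MeasurePreserving (fun z : ℝ × ℝ ↦ (z.1, -z.2)) :=
    (MeasurePreserving.id volume).prod (Measure.measurePreserving_neg volume)
  have hsum (z : ℝ × ℝ) : g z + g (z.1, -z.2) =
      2 * ENNReal.ofReal (Real.exp (-(z.1 ^ 2 + z.2 ^ 2)) * (‖α z‖ ^ 2 + ‖β z‖ ^ 2)) := by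
    rw [← ENNReal.ofReal_ofNat 2, ← ENNReal.ofReal_mul zero_le_two, mul_left_comm,
      ← hf.norm_sliceVal_sq_add_norm_sliceVal_conj_sq hI, mul_add,
      ENNReal.ofReal_add (by positivity) (by positivity)]
    simp only [g, neg_sq]
  have htwo := lintegral_add_comp_eq_two_mul hreflect hg
  simp only [hsum] at htwo
  rw [lintegral_const_mul' _ _ ENNReal.ofNat_ne_top] at htwo
  rw [fockNormSq, (ENNReal.mul_right_inj two_ne_zero ENNReal.ofNat_ne_top).1 htwo]

theorem fockNormSq_finite_independent_of_slice_general (hf : HasStem f α β)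
    (hI : I ∈ quatSphere) (hJ : J ∈ quatSphere)
    (hfI : AEStronglyMeasurable fun z ↦ f (sliceVal I z))
    (hfJ : AEStronglyMeasurable fun z ↦ f (sliceVal J z)) :
    fockNormSq I f = fockNormSq J f := by
  rw [hf.fockNormSq_eq_lintegral hI hfI, hf.fockNormSq_eq_lintegral hJ hfJ]

end FockNorm

theorem fockNormSq_finite_independent_of_slice (f : ℍ → ℍ) (a : ℕ → ℍ)
    (hf : ∀ p : ℍ, HasSum (fun m : ℕ => p ^ m * a m) (f p))
    (I J : ℍ) (hI : I ∈ quatSphere) (hJ : J ∈ quatSphere) :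
    fockNormSq I f < ⊤ ↔ fockNormSq J f < ⊤ := by
  rw [fockNormSq_finite_independent_of_slice_general (hasStem_of_hasSum hf) hI hJ
    (stronglyMeasurable_sliceVal_of_hasSum hf I).aestronglyMeasurable
    (stronglyMeasurable_sliceVal_of_hasSum hf J).aestronglyMeasurable]
end
end

section
/- For q, s ∈ ℍ let k_q(p) = Σ_{n=0}^∞ pⁿ q̄ⁿ / n! and k_s(p) = Σ_{n=0}^∞ pⁿ s̄ⁿ / n!. Then for every imaginary unit I ∈ 𝕊, ⟨k_q, k_s⟩_I = Σ_{n=0}^∞ sⁿ q̄ⁿ / n! = e_⋆^{s q̄}. -/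
open MeasureTheory Real Nat

noncomputable section

local notation "ℍ" => Quaternion ℝ

/-- The Fock inner product `⟨f, g⟩_I = (1/π) ∫ e^{-(x²+y²)} conj(g(x+yI)) f(x+yI) dx dy`. -/
def fockInner (I : ℍ) (f g : ℍ → ℍ) : ℍ :=
  π⁻¹ • ∫ z : ℝ × ℝ,
    Real.exp (-(z.1 ^ 2 + z.2 ^ 2)) • (star (g (sliceVal I z)) * f (sliceVal I z))

/-- The reproducing kernel `k_q(p) = e_⋆^{p q̄} = Σ pⁿ q̄ⁿ / n!`. -/
def fockKernel (q : ℍ) : ℍ → ℍ := fun p => ∑' n : ℕ, ((n ! : ℝ)⁻¹) • (p ^ n * (star q) ^ n)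

open scoped ComplexConjugate

/-!
Expanding both kernels, the integrand becomes a double series of terms
`sᵐ p̄ᵐ pⁿ q̄ⁿ / (m! n!)`, dominated by a multiple of `e^{-|p|² + (|s| + |q|) |p|}`, so it may be
integrated term by term. For fixed `m, n` the factors `sᵐ` and `q̄ⁿ` act by a real-linear map on
the slice, which is a copy of `ℂ`, and there the Gaussian moments of `z̄ᵐ zⁿ` are `π n! δₘₙ`:
a rotation kills the off-diagonal ones, and the diagonal ones are Gamma integrals. Nothing here is
special to `ℍ`: any Banach ⋆-algebra with a skew-adjoint square root of `-1` will do.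
-/

section GaussianMoments

lemma integrable_exp_neg_sq_norm_mul_exp_norm {V : Type*} [NormedAddCommGroup V]
    [InnerProductSpace ℝ V] [FiniteDimensional ℝ V] [MeasurableSpace V] [BorelSpace V] (c : ℝ) :
    Integrable fun v : V => Real.exp (-‖v‖ ^ 2) * Real.exp (c * ‖v‖) := by
  have hgauss : Integrable fun v : V => Real.exp (-(1 / 2) * ‖v‖ ^ 2) := by
    have h := (GaussianFourier.integrable_cexp_neg_mul_sq_norm_add (V := V) (b := 1 / 2)
      (by norm_num) 0 0).norm
    refine h.congr (.of_forall fun v => ?_)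
    simp [Complex.norm_exp, ← Complex.ofReal_pow]
  refine (hgauss.const_mul (Real.exp (c ^ 2 / 2))).mono'
    (Continuous.aestronglyMeasurable (by fun_prop)) (.of_forall fun v => ?_)
  rw [← Real.exp_add, ← Real.exp_add, Real.norm_eq_abs, Real.abs_exp, Real.exp_le_exp]
  linarith [sq_nonneg (c - ‖v‖)]

lemma integrable_gaussian_conj_pow_mul_pow (m n : ℕ) :
    Integrable fun z : ℂ => Real.exp (-‖z‖ ^ 2) • (conj z ^ m * z ^ n) := by
  refine ((integrable_exp_neg_sq_norm_mul_exp_norm 1).const_mul ((m + n)! : ℝ)).mono'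
    (Continuous.aestronglyMeasurable (by fun_prop)) (.of_forall fun z => ?_)
  have hpow : ‖z‖ ^ (m + n) ≤ Real.exp ‖z‖ * (m + n)! :=
    (div_le_iff₀ (by positivity)).1 (Real.pow_div_factorial_le_exp _ (norm_nonneg z) (m + n))
  calc ‖Real.exp (-‖z‖ ^ 2) • (conj z ^ m * z ^ n)‖
      = Real.exp (-‖z‖ ^ 2) * ‖z‖ ^ (m + n) := by
        rw [norm_smul, norm_mul, norm_pow, norm_pow, RCLike.norm_conj, ← pow_add,
          Real.norm_eq_abs, Real.abs_exp]
    _ ≤ Real.exp (-‖z‖ ^ 2) * (Real.exp ‖z‖ * (m + n)!) := by gcongr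
    _ = (m + n)! * (Real.exp (-‖z‖ ^ 2) * Real.exp (1 * ‖z‖)) := by rw [one_mul]; ring

lemma integral_gaussian_norm_pow (n : ℕ) :
    ∫ z : ℂ, Real.exp (-‖z‖ ^ 2) * ‖z‖ ^ (2 * n) = π * n ! := by
  have h := Complex.integral_rpow_mul_exp_neg_rpow (p := 2) (q := (2 * n : ℕ)) one_le_two
    (by linarith [(2 * n : ℕ).cast_nonneg (α := ℝ)])
  have harg : (((2 * n : ℕ) : ℝ) + 2) / 2 = n + 1 := by push_cast; ring
  rw [harg, Real.Gamma_nat_eq_factorial, mul_div_cancel_left₀ π two_ne_zero] at h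
  simpa only [Real.rpow_natCast, Real.rpow_two, mul_comm] using h

lemma integral_gaussian_conj_pow_mul_pow_of_ne {m n : ℕ} (hmn : m ≠ n) :
    ∫ z : ℂ, Real.exp (-‖z‖ ^ 2) • (conj z ^ m * z ^ n) = 0 := by
  -- Rotating by `ω` multiplies the integral by `ω̄ᵐ ωⁿ`, which is `-1` for this angle.
  set ω : Circle := Circle.exp (π / ((n : ℝ) - m)) with hω
  have hrot : conj (ω : ℂ) ^ m * (ω : ℂ) ^ n = -1 := by
    have hsub : (n : ℂ) - m ≠ 0 := sub_ne_zero.2 (Nat.cast_injective.ne hmn.symm)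
    rw [← Circle.coe_inv_eq_conj, hω, ← Circle.exp_neg, Circle.coe_exp, Circle.coe_exp,
      ← Complex.exp_nat_mul, ← Complex.exp_nat_mul, ← Complex.exp_add, ← Complex.exp_pi_mul_I]
    congr 1
    push_cast
    field_simp
    ring
  have hneg := (rotation ω).measurePreserving.integral_comp
    (rotation ω).toHomeomorph.measurableEmbedding
    fun z : ℂ => Real.exp (-‖z‖ ^ 2) • (conj z ^ m * z ^ n)
  have hrotated (z : ℂ) : conj (rotation ω z) ^ m * rotation ω z ^ n = -(conj z ^ m * z ^ n) := by
    rw [rotation_apply, map_mul, mul_pow, mul_pow, mul_mul_mul_comm, hrot, neg_one_mul]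
  simp only [hrotated, LinearIsometryEquiv.norm_map, smul_neg, integral_neg] at hneg
  exact self_eq_neg.1 hneg.symm

theorem integral_gaussian_conj_pow_mul_pow (m n : ℕ) :
    ∫ z : ℂ, Real.exp (-‖z‖ ^ 2) • (conj z ^ m * z ^ n) = if m = n then (π * n ! : ℝ) else 0 := by
  split_ifs with hmn
  · subst hmn
    rw [← integral_gaussian_norm_pow m, ← integral_complex_ofReal]
    congr with z
    rw [← mul_pow, Complex.conj_mul', ← pow_mul, Complex.real_smul]
    push_cast
    rfl
  · exact integral_gaussian_conj_pow_mul_pow_of_ne hmn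

end GaussianMoments

section TermwiseIntegration

lemma hasSum_pow_div_factorial_mul_pow_div_factorial (x y : ℝ) :
    HasSum (fun k : ℕ × ℕ => x ^ k.1 / k.1 ! * (y ^ k.2 / k.2 !)) (Real.exp (x + y)) := by
  have hexp (t : ℝ) : HasSum (fun n : ℕ => t ^ n / n !) (Real.exp t) := by
    simpa only [Real.exp_eq_exp_ℝ] using NormedSpace.expSeries_div_hasSum_exp t
  have hprod := summable_mul_of_summable_norm
    (Real.summable_pow_div_factorial x).norm (Real.summable_pow_div_factorial y).norm
  rw [Real.exp_add]
  exact (hexp x).mul (hexp y) hprod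

variable {E : Type*} [NormedAddCommGroup E] [NormedSpace ℝ E] [CompleteSpace E]

lemma integral_gaussian_apply_conj_pow_mul_pow (L : ℂ →L[ℝ] E) (m n : ℕ) :
    ∫ z : ℂ, Real.exp (-‖z‖ ^ 2) • L (conj z ^ m * z ^ n) =
      if m = n then (π * n ! : ℝ) • L 1 else 0 := by
  have h := L.integral_comp_comm (integrable_gaussian_conj_pow_mul_pow m n)
  simp only [map_smul, integral_gaussian_conj_pow_mul_pow] at h
  rw [h]
  split_ifs
  · rw [← map_smul, Complex.real_smul, mul_one]
  · rw [Complex.ofReal_zero, map_zero]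

theorem hasSum_integral_gaussian_apply_conj_pow_mul_pow {T : ℕ → ℕ → ℂ →L[ℝ] E} {C α β : ℝ}
    (hT : ∀ m n, ‖T m n‖ ≤ C * (α ^ m / m ! * (β ^ n / n !))) :
    HasSum (fun n => (π * n ! : ℝ) • T n n 1)
      (∫ z : ℂ, Real.exp (-‖z‖ ^ 2) • ∑' k : ℕ × ℕ, T k.1 k.2 (conj z ^ k.1 * z ^ k.2)) := by
  let bound (k : ℕ × ℕ) (z : ℂ) : ℝ :=
    C * ((α * ‖z‖) ^ k.1 / k.1 ! * ((β * ‖z‖) ^ k.2 / k.2 !))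
  have hbound (k : ℕ × ℕ) (z : ℂ) : ‖T k.1 k.2 (conj z ^ k.1 * z ^ k.2)‖ ≤ bound k z :=
    calc ‖T k.1 k.2 (conj z ^ k.1 * z ^ k.2)‖
        ≤ C * (α ^ k.1 / k.1 ! * (β ^ k.2 / k.2 !)) * ‖conj z ^ k.1 * z ^ k.2‖ :=
          (T k.1 k.2).le_of_opNorm_le (hT k.1 k.2) _
      _ = bound k z := by
          rw [norm_mul, norm_pow, norm_pow, RCLike.norm_conj]
          ring
  have hbound_sum (z : ℂ) : HasSum (bound · z) (C * Real.exp ((α + β) * ‖z‖)) := by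
    rw [add_mul]
    exact (hasSum_pow_div_factorial_mul_pow_div_factorial _ _).mul_left C
  have hsum := hasSum_integral_of_dominated_convergence (μ := (volume : Measure ℂ))
    (F := fun (k : ℕ × ℕ) z => Real.exp (-‖z‖ ^ 2) • T k.1 k.2 (conj z ^ k.1 * z ^ k.2))
    (fun k z => Real.exp (-‖z‖ ^ 2) * bound k z)
    (fun k => Continuous.aestronglyMeasurable (by fun_prop))
    (fun k => .of_forall fun z => by
      rw [norm_smul, Real.norm_eq_abs, Real.abs_exp]
      gcongr
      exact hbound k z)
    (.of_forall fun z => (hbound_sum z).summable.mul_left _)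
    (by
      simp only [tsum_mul_left, (hbound_sum _).tsum_eq, mul_left_comm _ C]
      exact (integrable_exp_neg_sq_norm_mul_exp_norm (α + β)).const_mul C)
    (.of_forall fun z =>
      ((hbound_sum z).summable.of_norm_bounded (hbound · z)).hasSum.const_smul _)
  simp only [integral_gaussian_apply_conj_pow_mul_pow] at hsum
  have hdiag : Function.Injective fun n : ℕ => (n, n) := fun _ _ h => congrArg Prod.fst h
  rw [← hdiag.hasSum_iff] at hsum
  · simpa only [Function.comp_def, if_true] using hsum
  · rintro ⟨m, n⟩ hk
    exact if_neg fun hmn : m = n => hk ⟨m, by rw [hmn]⟩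

end TermwiseIntegration

/-- The exponential `e_⋆^{ab} = Σ aⁿ bⁿ / n!` of the ⋆-product, in which all powers of `a` stand
to the left of all powers of `b`. Thus `k_q(p)` is `starProdExp p (star q)`. -/
def starProdExp {A : Type*} [Ring A] [Algebra ℝ A] [TopologicalSpace A] (a b : A) : A :=
  ∑' n : ℕ, (n ! : ℝ)⁻¹ • (a ^ n * b ^ n)

section StarProdExp

lemma star_starProdExp {A : Type*} [Ring A] [Algebra ℝ A] [TopologicalSpace A] [T2Space A]
    [StarRing A] [StarModule ℝ A] [ContinuousStar A] (a b : A) :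
    star (starProdExp a b) = starProdExp (star b) (star a) := by
  simp only [starProdExp, tsum_star, star_smul, star_mul, star_pow, star_trivial]

variable {A : Type*} [NormedRing A] [NormOneClass A] [NormedAlgebra ℝ A]

lemma norm_inv_factorial_smul_pow_mul_pow_le (a b : A) (n : ℕ) :
    ‖(n ! : ℝ)⁻¹ • (a ^ n * b ^ n)‖ ≤ (‖a‖ * ‖b‖) ^ n / n ! := by
  rw [norm_smul, norm_inv, Real.norm_natCast, div_eq_inv_mul, mul_pow]
  gcongr
  exact (norm_mul_le _ _).trans (mul_le_mul (norm_pow_le a n) (norm_pow_le b n)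
    (norm_nonneg _) (by positivity))

lemma summable_norm_inv_factorial_smul_pow_mul_pow (a b : A) :
    Summable fun n : ℕ => ‖(n ! : ℝ)⁻¹ • (a ^ n * b ^ n)‖ :=
  (Real.summable_pow_div_factorial (‖a‖ * ‖b‖)).of_nonneg_of_le (fun _ => norm_nonneg _)
    (norm_inv_factorial_smul_pow_mul_pow_le a b)

/-- The map `w ↦ aᵐ ψ(w) bⁿ / (m! n!)`, through which the `(m, n)` term of the product
`e_⋆^{aψ(v)} e_⋆^{ψ(w)b}` depends on `vᵐ wⁿ`. -/
def starProdExpTerm (ψ : ℂ →ₐ[ℝ] A) (a b : A) (m n : ℕ) : ℂ →L[ℝ] A :=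
  ((m ! : ℝ)⁻¹ * (n ! : ℝ)⁻¹) • (ContinuousLinearMap.mulLeftRight ℝ A (a ^ m) (b ^ n)).comp
    ψ.toLinearMap.toContinuousLinearMap

lemma starProdExp_mul_starProdExp [CompleteSpace A] (ψ : ℂ →ₐ[ℝ] A) (a b : A) (v w : ℂ) :
    starProdExp a (ψ v) * starProdExp (ψ w) b =
      ∑' k : ℕ × ℕ, starProdExpTerm ψ a b k.1 k.2 (v ^ k.1 * w ^ k.2) := by
  rw [starProdExp, starProdExp, tsum_mul_tsum_of_summable_norm
    (summable_norm_inv_factorial_smul_pow_mul_pow _ _)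
    (summable_norm_inv_factorial_smul_pow_mul_pow _ _)]
  refine tsum_congr fun k => ?_
  simp only [starProdExpTerm, smul_apply, ContinuousLinearMap.comp_apply,
    ContinuousLinearMap.mulLeftRight_apply, LinearMap.coe_toContinuousLinearMap',
    AlgHom.toLinearMap_apply, map_mul, map_pow, smul_mul_smul_comm, mul_assoc]

lemma norm_starProdExpTerm_le (ψ : ℂ →ₐ[ℝ] A) (a b : A) (m n : ℕ) :
    ‖starProdExpTerm ψ a b m n‖ ≤
      ‖ψ.toLinearMap.toContinuousLinearMap‖ * (‖a‖ ^ m / m ! * (‖b‖ ^ n / n !)) := by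
  have hmul : ‖ContinuousLinearMap.mulLeftRight ℝ A (a ^ m) (b ^ n)‖ ≤ ‖a‖ ^ m * ‖b‖ ^ n :=
    (ContinuousLinearMap.opNorm_mulLeftRight_apply_apply_le ℝ A _ _).trans
      (mul_le_mul (norm_pow_le a m) (norm_pow_le b n) (norm_nonneg _) (by positivity))
  calc ‖starProdExpTerm ψ a b m n‖
      ≤ (m ! : ℝ)⁻¹ * (n ! : ℝ)⁻¹ *
          (‖a‖ ^ m * ‖b‖ ^ n * ‖ψ.toLinearMap.toContinuousLinearMap‖) := by
        rw [starProdExpTerm, norm_smul, Real.norm_of_nonneg (by positivity)]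
        gcongr
        exact (ContinuousLinearMap.opNorm_comp_le _ _).trans (by gcongr)
    _ = ‖ψ.toLinearMap.toContinuousLinearMap‖ * (‖a‖ ^ m / m ! * (‖b‖ ^ n / n !)) := by ring

theorem integral_gaussian_starProdExp_mul_starProdExp [CompleteSpace A] (ψ : ℂ →ₐ[ℝ] A) (a b : A) :
    ∫ z : ℂ, Real.exp (-‖z‖ ^ 2) • (starProdExp a (ψ (conj z)) * starProdExp (ψ z) b) =
      π • starProdExp a b := by
  simp only [starProdExp_mul_starProdExp]
  rw [← (hasSum_integral_gaussian_apply_conj_pow_mul_pow (norm_starProdExpTerm_le ψ a b)).tsum_eq,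
    starProdExp, ← tsum_const_smul'']
  refine tsum_congr fun n => ?_
  have hn : (n ! : ℝ) ≠ 0 := by positivity
  simp only [starProdExpTerm, smul_apply, ContinuousLinearMap.comp_apply,
    ContinuousLinearMap.mulLeftRight_apply, LinearMap.coe_toContinuousLinearMap',
    AlgHom.toLinearMap_apply, map_one, mul_one, smul_smul]
  congr 1
  field_simp

end StarProdExp

lemma star_complexLiftAux {A : Type*} [Ring A] [Algebra ℝ A] [StarRing A] [StarModule ℝ A]
    {I : A} (hI : I * I = -1) (hstar : star I = -I) (z : ℂ) :
    star (Complex.liftAux I hI z) = Complex.liftAux I hI (conj z) := by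
  simp only [Complex.liftAux_apply, star_add, star_smul, hstar, ← algebraMap_star_comm,
    star_trivial, Complex.conj_re, Complex.conj_im, smul_neg, neg_smul]

theorem fockInner_kernel_kernel_general {A : Type*} [NormedRing A] [NormOneClass A]
    [NormedAlgebra ℝ A] [CompleteSpace A] [StarRing A] [StarModule ℝ A] [ContinuousStar A]
    {I : A} (hI : I * I = -1) (hstar : star I = -I) (q s : A) :
    π⁻¹ • ∫ z : ℝ × ℝ, Real.exp (-(z.1 ^ 2 + z.2 ^ 2)) •
      (star (starProdExp (algebraMap ℝ A z.1 + algebraMap ℝ A z.2 * I) (star s)) *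
        starProdExp (algebraMap ℝ A z.1 + algebraMap ℝ A z.2 * I) (star q)) =
      starProdExp s (star q) := by
  let ψ : ℂ →ₐ[ℝ] A := Complex.liftAux I hI
  have hψ (z : ℂ) : algebraMap ℝ A z.re + algebraMap ℝ A z.im * I = ψ z := by
    rw [Complex.liftAux_apply, Algebra.smul_def]
  have hψstar (z : ℂ) : star (ψ z) = ψ (conj z) := star_complexLiftAux hI hstar z
  have hnorm (z : ℂ) : z.re ^ 2 + z.im ^ 2 = ‖z‖ ^ 2 := by
    rw [Complex.sq_norm, Complex.normSq_apply, sq, sq]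
  rw [← Complex.volume_preserving_equiv_real_prod.integral_comp
    Complex.measurableEquivRealProd.measurableEmbedding]
  simp only [Complex.measurableEquivRealProd_apply, hψ, hnorm, star_starProdExp, star_star, hψstar]
  rw [integral_gaussian_starProdExp_mul_starProdExp, inv_smul_smul₀ pi_ne_zero]

instance : StarModule ℝ ℍ := ⟨Quaternion.star_smul⟩

lemma star_of_mem_quatSphere {I : ℍ} (hI : I ∈ quatSphere) : star I = -I :=
  Quaternion.star_eq_neg.2 hI.1

lemma mul_self_of_mem_quatSphere {I : ℍ} (hI : I ∈ quatSphere) : I * I = -1 := by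
  rw [← neg_eq_iff_eq_neg, ← mul_neg, ← star_of_mem_quatSphere hI, Quaternion.self_mul_star,
    Quaternion.normSq_eq_norm_mul_self, hI.2, mul_one, Quaternion.coe_one]

theorem fockInner_kernel_kernel (q s : ℍ) (I : ℍ) (hI : I ∈ quatSphere) :
    fockInner I (fockKernel q) (fockKernel s) =
      ∑' n : ℕ, ((n ! : ℝ)⁻¹) • (s ^ n * (star q) ^ n) :=
  fockInner_kernel_kernel_general (mul_self_of_mem_quatSphere hI) (star_of_mem_quatSphere hI)
    q s
end
end
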